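/- arXiv:2512.15428 — 2 statements merged into one kernel-verified Lean document; each statement's English description precedes it below -/
import Mathlib

section
/- Let d be a positive integer, let ρ be a positive definite Hermitian d×d complex matrix with trace 1, and let {E_i}_{i∈I} be a finite family of nonzero positive semidefinite Hermitian d×d matrices with Σ_i E_i = 𝟙 whose real span is the whole space of Hermitian d×d matrices (an informationally complete POVM). Then for every nonzero Hermitian matrix L with Re Tr[ρL] = 0, the classical Fisher information is strictly smaller than the quantum Fisher information: Σ_i (Re Tr[ρLE_i])² / Tr[ρE_i] < Re Tr[ρL²]. (An IC-POVM can never saturate the quantum Cramér–Rao bound.) -/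
open Matrix
open scoped ComplexOrder

/-!
The classical score `s i = Re Tr[ρLE_i] / Tr[ρE_i]` of the outcome `i` is the real number closest to
`L` for the quadratic form `X ↦ Re Tr[ρXE_iX]`. Completing the square at each outcome and using
`∑ E_i = 1` gives
`I_Q - I_C = ∑ i, Re Tr[ρ(L - s i)E_i(L - s i)]`,
a sum of nonnegative terms. Since `ρ` is positive definite, the `i`-th term vanishes only if
`E_i L = s i • E_i`; taking adjoints, `E_i` then commutes with `L`. If this happens for all `i` and
the `E_i` span the Hermitian matrices, then `L` commutes with all of these, hence is a real scalar,
which the condition `Re Tr[ρL] = 0` forces to be zero.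
-/

section PositiveMatrices

variable {𝕜 m n : Type*} [RCLike 𝕜] [Fintype n]

open scoped MatrixOrder in
theorem exists_eq_conjTranspose_mul_self {A : Matrix n n 𝕜} (hA : A.PosSemidef) :
    ∃ S : Matrix n n 𝕜, A = Sᴴ * S := by
  classical
  exact CStarAlgebra.nonneg_iff_eq_star_mul_self.mp hA.nonneg

theorem conjTranspose_mul_mul_eq_zero_iff {A : Matrix n n 𝕜} (hA : A.PosSemidef)
    {X : Matrix n m 𝕜} : Xᴴ * A * X = 0 ↔ A * X = 0 := by
  obtain ⟨S, rfl⟩ := exists_eq_conjTranspose_mul_self hA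
  rw [← Matrix.mul_assoc, Matrix.mul_assoc (Xᴴ * Sᴴ), ← conjTranspose_mul,
    conjTranspose_mul_self_eq_zero, conjTranspose_mul_self_mul_eq_zero]

theorem re_trace_mul_nonneg {A B : Matrix n n 𝕜} (hA : A.PosSemidef) (hB : B.PosSemidef) :
    0 ≤ RCLike.re (A * B).trace := by
  obtain ⟨S, rfl⟩ := exists_eq_conjTranspose_mul_self hB
  rw [← Matrix.mul_assoc, trace_mul_cycle]
  exact (RCLike.nonneg_iff.mp (hA.mul_mul_conjTranspose_same S).trace_nonneg).1

theorem re_trace_mul_pos {A B : Matrix n n 𝕜} (hA : A.PosDef) (hB : B.PosSemidef) (hB₀ : B ≠ 0) :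
    0 < RCLike.re (A * B).trace := by
  classical
  obtain ⟨S, rfl⟩ := exists_eq_conjTranspose_mul_self hB
  have hcongr : (S * A * Sᴴ).PosSemidef := hA.posSemidef.mul_mul_conjTranspose_same S
  have hne : S * A * Sᴴ ≠ 0 := fun h => by
    have hkill : A * Sᴴ = 0 := by
      rwa [← conjTranspose_mul_mul_eq_zero_iff hA.posSemidef, conjTranspose_conjTranspose]
    have hS : Sᴴ = 0 := hA.isUnit.mul_right_eq_zero.mp hkill
    exact hB₀ (by rw [hS, Matrix.zero_mul])
  have hpos : 0 < (S * A * Sᴴ).trace :=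
    hcongr.trace_nonneg.lt_of_ne' (hcongr.trace_eq_zero_iff.not.mpr hne)
  rw [← Matrix.mul_assoc, trace_mul_cycle]
  exact (RCLike.pos_iff.mp hpos).1

theorem re_trace_mul_mul_comm {A B C : Matrix n n 𝕜} (hA : A.IsHermitian) (hB : B.IsHermitian)
    (hC : C.IsHermitian) : RCLike.re (A * B * C).trace = RCLike.re (A * C * B).trace := by
  have hconj : (A * C * B).trace = star (A * B * C).trace := by
    rw [← trace_conjTranspose, conjTranspose_mul, conjTranspose_mul, hA.eq, hB.eq, hC.eq,
      Matrix.mul_assoc A, trace_mul_comm A, Matrix.mul_assoc]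
  rw [hconj, RCLike.star_def, RCLike.conj_re]

end PositiveMatrices

section Commutation

theorem commute_of_mem_span {R A : Type*} [CommSemiring R] [Semiring A] [Algebra R A] {s : Set A}
    {a b : A} (hs : ∀ x ∈ s, Commute x b) (ha : a ∈ Submodule.span R s) : Commute a b := by
  induction ha using Submodule.span_induction with
  | mem x hx => exact hs x hx
  | zero => exact Commute.zero_left b
  | add x y _ _ hx hy => exact hx.add_left hy
  | smul r x _ hx => exact hx.smul_left r

theorem commute_of_mul_eq_smul {R A : Type*} [Star R] [TrivialStar R] [Mul A] [StarMul A] [SMul R A]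
    [StarModule R A] {a b : A} (ha : IsSelfAdjoint a) (hb : IsSelfAdjoint b) {c : R}
    (h : a * b = c • a) : Commute a b := by
  have hadj : b * a = c • a := by
    simpa only [star_mul, star_smul, ha.star_eq, hb.star_eq, star_trivial] using congrArg star h
  exact h.trans hadj.symm

variable {n : Type*} [Fintype n] [DecidableEq n]

theorem mem_range_scalar_of_commute_isHermitian {R : Type*} [Semiring R] [StarRing R]
    {L : Matrix n n R} (h : ∀ B : Matrix n n R, B.IsHermitian → Commute B L) :
    L ∈ Set.range (scalar n) := by
  refine mem_range_scalar_of_commute_single fun i j hij => ?_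
  have hdiag : (single i i (1 : R)).IsHermitian := by simp [IsHermitian]
  have hsymm : (single i j (1 : R) + single j i 1).IsHermitian := by
    simp [IsHermitian, add_comm]
  have hprod : single i i (1 : R) * (single i j 1 + single j i 1) = single i j 1 := by
    simp [Matrix.mul_add, hij]
  simpa only [hprod] using (h _ hdiag).mul_left (h _ hsymm)

theorem eq_zero_of_mem_range_scalar_of_re_trace_mul_eq_zero {𝕜 : Type*} [RCLike 𝕜]
    {ρ L : Matrix n n 𝕜} (hρ : RCLike.re ρ.trace ≠ 0) (hL : L.IsHermitian)
    (hscalar : L ∈ Set.range (scalar n)) (hmean : RCLike.re (ρ * L).trace = 0) : L = 0 := by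
  obtain ⟨z, rfl⟩ := hscalar
  cases isEmpty_or_nonempty n with
  | inl _ => exact Subsingleton.elim _ _
  | inr hn =>
    obtain ⟨i⟩ := hn
    have hreal : (RCLike.re z : 𝕜) = z := RCLike.conj_eq_iff_re.mp (by simpa using hL.apply i i)
    have htrace : RCLike.re (ρ * scalar n z).trace = RCLike.re ρ.trace * RCLike.re z := by
      rw [scalar_apply, ← smul_one_eq_diagonal, Matrix.mul_smul, Matrix.mul_one, trace_smul,
        smul_eq_mul, ← hreal, RCLike.re_ofReal_mul, RCLike.ofReal_re, mul_comm]
    have hz : RCLike.re z = 0 := (mul_eq_zero.mp (htrace ▸ hmean)).resolve_left hρ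
    rw [← hreal, hz, RCLike.ofReal_zero, map_zero]

end Commutation

section FisherInformation

variable {𝕜 n ι : Type*} [RCLike 𝕜] [Fintype n]

/-- The score `∂ log p` of the outcome with effect `E`, for the model around the state `ρ` with
symmetric logarithmic derivative `L`: the outcome has probability `p = Tr[ρE]`, with derivative
`∂p = Re Tr[ρLE]`. It is the junk value `0` when `p = 0`. -/
noncomputable def score (ρ L E : Matrix n n 𝕜) : ℝ :=
  RCLike.re (ρ * L * E).trace / RCLike.re (ρ * E).trace

/-- The classical Fisher information of the POVM `E`, for the model around the state `ρ` with
symmetric logarithmic derivative `L`. Outcomes of probability `0` contribute `0`, as `x / 0 = 0`. -/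
noncomputable def classicalFisherInfo [Fintype ι] (ρ L : Matrix n n 𝕜) (E : ι → Matrix n n 𝕜) : ℝ :=
  ∑ i, RCLike.re (ρ * L * E i).trace ^ 2 / RCLike.re (ρ * E i).trace

/-- The quantum Fisher information of the model around the state `ρ` with symmetric logarithmic
derivative `L`. -/
def quantumFisherInfo (ρ L : Matrix n n 𝕜) : ℝ :=
  RCLike.re (ρ * L * L).trace

/-- Informational completeness of a family of effects: its outcome probabilities determine the
state, i.e. the effects span the Hermitian matrices over `ℝ`. -/
def IsInformationallyComplete (E : ι → Matrix n n 𝕜) : Prop :=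
  ∀ B : Matrix n n 𝕜, B.IsHermitian → B ∈ Submodule.span ℝ (Set.range E)

variable {ρ L : Matrix n n 𝕜}

theorem IsInformationallyComplete.exists_not_commute {E : ι → Matrix n n 𝕜}
    (hE : IsInformationallyComplete E) (hρ : RCLike.re ρ.trace ≠ 0) (hL : L.IsHermitian)
    (hL₀ : L ≠ 0) (hmean : RCLike.re (ρ * L).trace = 0) : ∃ i, ¬ Commute (E i) L := by
  classical
  by_contra! hcomm
  refine hL₀ (eq_zero_of_mem_range_scalar_of_re_trace_mul_eq_zero hρ hL ?_ hmean)
  exact mem_range_scalar_of_commute_isHermitian fun B hB =>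
    commute_of_mem_span (Set.forall_mem_range.mpr hcomm) (hE B hB)

theorem quantumFisherInfo_eq_sum [Fintype ι] [DecidableEq n] {E : ι → Matrix n n 𝕜}
    (hsum : ∑ i, E i = 1) :
    quantumFisherInfo ρ L = ∑ i, RCLike.re (ρ * L * E i * L).trace := by
  rw [← map_sum, ← trace_sum, ← Finset.sum_mul, ← Finset.mul_sum, hsum, Matrix.mul_one,
    quantumFisherInfo]

theorem re_trace_mul_sub_smul_one [DecidableEq n] {E : Matrix n n 𝕜} (hρ : ρ.IsHermitian)
    (hE : E.IsHermitian) (hL : L.IsHermitian) (c : ℝ) :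
    RCLike.re (ρ * ((L - c • 1) * E * (L - c • 1))).trace =
      RCLike.re (ρ * L * E * L).trace - 2 * c * RCLike.re (ρ * L * E).trace
        + c ^ 2 * RCLike.re (ρ * E).trace := by
  have hexpand : ρ * ((L - c • 1) * E * (L - c • 1)) =
      ρ * L * E * L - c • (ρ * L * E) - c • (ρ * E * L) + c ^ 2 • (ρ * E) := by
    simp only [Matrix.sub_mul, Matrix.mul_sub, Matrix.smul_mul, Matrix.mul_smul, Matrix.one_mul,
      Matrix.mul_one, Matrix.mul_assoc, smul_sub, smul_smul, sq]
    abel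
  simp only [hexpand, trace_add, trace_sub, trace_smul, map_add, map_sub, RCLike.smul_re,
    re_trace_mul_mul_comm hρ hE hL]
  ring

theorem re_trace_mul_sub_score [DecidableEq n] {E : Matrix n n 𝕜} (hρ : ρ.IsHermitian)
    (hE : E.IsHermitian) (hL : L.IsHermitian) (hp : RCLike.re (ρ * E).trace ≠ 0) :
    RCLike.re (ρ * ((L - score ρ L E • 1) * E * (L - score ρ L E • 1))).trace =
      RCLike.re (ρ * L * E * L).trace
        - RCLike.re (ρ * L * E).trace ^ 2 / RCLike.re (ρ * E).trace := by
  rw [re_trace_mul_sub_smul_one hρ hE hL, score]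
  field_simp
  ring

theorem quantumFisherInfo_sub_classicalFisherInfo [Fintype ι] [DecidableEq n]
    {E : ι → Matrix n n 𝕜} (hρ : ρ.IsHermitian) (hE : ∀ i, (E i).IsHermitian) (hsum : ∑ i, E i = 1)
    (hL : L.IsHermitian) (hp : ∀ i, RCLike.re (ρ * E i).trace ≠ 0) :
    quantumFisherInfo ρ L - classicalFisherInfo ρ L E =
      ∑ i, RCLike.re
        (ρ * ((L - score ρ L (E i) • 1) * E i * (L - score ρ L (E i) • 1))).trace := by
  simp only [re_trace_mul_sub_score hρ (hE _) hL (hp _), Finset.sum_sub_distrib,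
    quantumFisherInfo_eq_sum hsum, classicalFisherInfo]

/-- Taking adjoints, `E j * L = c • E j` says that the range of `E j` lies in the `c`-eigenspace of
`L`. -/
theorem stmt10_general [Fintype ι] [DecidableEq n] {E : ι → Matrix n n 𝕜} (hρ : ρ.PosDef)
    (hE : ∀ i, (E i).PosSemidef) (hE₀ : ∀ i, E i ≠ 0) (hsum : ∑ i, E i = 1) (hL : L.IsHermitian)
    {j : ι} (hj : ∀ c : ℝ, E j * L ≠ c • E j) :
    classicalFisherInfo ρ L E < quantumFisherInfo ρ L := by
  have hadj : ∀ c : ℝ, (L - c • (1 : Matrix n n 𝕜))ᴴ = L - c • 1 := fun c => by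
    simp [conjTranspose_sub, conjTranspose_smul, hL.eq]
  have hpsd : ∀ i, ∀ c : ℝ, ((L - c • 1) * E i * (L - c • 1)).PosSemidef := fun i c => by
    have hconj := (hE i).conjTranspose_mul_mul_same (L - c • 1)
    rwa [hadj] at hconj
  have hne : ∀ c : ℝ, (L - c • 1) * E j * (L - c • 1) ≠ 0 := fun c => by
    have hresidual : E j * (L - c • 1) ≠ 0 := by
      rw [Matrix.mul_sub, Matrix.mul_smul, Matrix.mul_one]
      exact sub_ne_zero.mpr (hj c)
    have hconj := (conjTranspose_mul_mul_eq_zero_iff (hE j)).not.mpr hresidual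
    rwa [hadj] at hconj
  rw [← sub_pos, quantumFisherInfo_sub_classicalFisherInfo hρ.isHermitian
    (fun i => (hE i).isHermitian) hsum hL fun i => (re_trace_mul_pos hρ (hE i) (hE₀ i)).ne']
  exact Finset.sum_pos' (fun i _ => re_trace_mul_nonneg hρ.posSemidef (hpsd i (score ρ L (E i))))
    ⟨j, Finset.mem_univ j, re_trace_mul_pos hρ (hpsd j (score ρ L (E j))) (hne (score ρ L (E j)))⟩

end FisherInformation

/-- An informationally complete POVM can never saturate the quantum Cramér–Rao bound:
for every nonzero mean-zero Hermitian direction `L`, the classical Fisher information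
`Σ_i (Re Tr[ρLE_i])² / Tr[ρE_i]` is strictly smaller than the quantum Fisher
information `Re Tr[ρL²]`. -/
theorem stmt10 (d : ℕ) (hd : 0 < d) (ι : Type) [Fintype ι]
    (ρ : Matrix (Fin d) (Fin d) ℂ) (hρ : ρ.PosDef) (hρtr : ρ.trace = 1)
    (E : ι → Matrix (Fin d) (Fin d) ℂ)
    (hE : ∀ i, (E i).PosSemidef) (hEne : ∀ i, E i ≠ 0)
    (hsum : ∑ i, E i = 1)
    (hIC : ∀ B : Matrix (Fin d) (Fin d) ℂ, B.IsHermitian →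
      B ∈ Submodule.span ℝ (Set.range E))
    (L : Matrix (Fin d) (Fin d) ℂ) (hL : L.IsHermitian) (hLne : L ≠ 0)
    (hmz : ((ρ * L).trace).re = 0) :
    ∑ i, (((ρ * L * E i).trace).re) ^ 2 / ((ρ * E i).trace).re
      < ((ρ * L * L).trace).re := by
  obtain ⟨j, hj⟩ :=
    IsInformationallyComplete.exists_not_commute hIC (by simp [hρtr]) hL hLne hmz
  exact stmt10_general hρ hE hEne hsum hL fun c hc =>
    hj (commute_of_mul_eq_smul (hE j).isHermitian hL hc)
end

section
/- Let d be a positive integer and let {E_i}_{i∈I} be a finite family of nonzero positive semidefinite Hermitian d×d complex matrices with Σ_i E_i = 𝟙 whose real span is the whole space of Hermitian d×d matrices (an informationally complete POVM). If real numbers (γ_i)_{i∈I} satisfy γ_j · Tr[E_j] = Σ_i Tr[E_j E_i] · γ_i for every j ∈ I, then all the γ_i are equal to one another. -/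
open Matrix
open scoped ComplexOrder

/-!
The averaging condition says that `γ` is harmonic for the weights `Tr[E_j E_i]`, which are
nonnegative and symmetric. Multiplying it by `γ_j` and summing over `j` shows that the Dirichlet
energy `∑ Tr[E_j E_i] (γ_j - γ_i)²` vanishes, so that `Tr[E_j E_i] = 0`, and hence `E_j E_i = 0`,
whenever `γ_j ≠ γ_i`.

Suppose `γ_i ≠ γ_j`. Every `γ_l` differs from `γ_i` or from `γ_j`, so `E_i E_l E_j = 0` for all `l`,
and by informational completeness `E_i A E_j = 0` for all Hermitian `A`. Taking `A` to be the
rank-one matrices `v v*` forces `E_i = 0` or `E_j = 0`.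
-/

section DirichletForm

variable {ι R : Type*} [Fintype ι] [CommRing R] {K : Matrix ι ι R}

theorem sum_sum_mul_sub_sq_of_isSymm (hK : K.IsSymm) (f : ι → R) :
    ∑ i, ∑ j, K i j * (f i - f j) ^ 2 = 2 * ∑ i, f i * ∑ j, K i j * (f i - f j) := by
  have swap : ∑ i, ∑ j, f j * (K i j * (f j - f i)) = ∑ i, ∑ j, f i * (K i j * (f i - f j)) := by
    rw [Finset.sum_comm]
    simp only [hK.apply]
  calc ∑ i, ∑ j, K i j * (f i - f j) ^ 2
      = ∑ i, ∑ j, (f i * (K i j * (f i - f j)) + f j * (K i j * (f j - f i))) := by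
        congr! 2; ring
    _ = 2 * ∑ i, f i * ∑ j, K i j * (f i - f j) := by
        simp only [Finset.sum_add_distrib, swap, Finset.mul_sum, two_mul]

theorem eq_of_sum_mul_sub_eq_zero [LinearOrder R] [IsStrictOrderedRing R] (hK : K.IsSymm)
    (hK₀ : ∀ i j, 0 ≤ K i j) {f : ι → R} (hf : ∀ i, ∑ j, K i j * (f i - f j) = 0)
    {i j : ι} (hij : K i j ≠ 0) : f i = f j := by
  have nonneg (a b : ι) : 0 ≤ K a b * (f a - f b) ^ 2 := mul_nonneg (hK₀ a b) (sq_nonneg _)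
  have energy : ∑ a, ∑ b, K a b * (f a - f b) ^ 2 = 0 := by
    simp only [sum_sum_mul_sub_sq_of_isSymm hK, hf, mul_zero, Finset.sum_const_zero]
  have row : ∑ b, K i b * (f i - f b) ^ 2 = 0 :=
    congrFun ((Fintype.sum_eq_zero_iff_of_nonneg fun a ↦
      Finset.sum_nonneg fun b _ ↦ nonneg a b).mp energy) i
  have entry : K i j * (f i - f j) ^ 2 = 0 :=
    congrFun ((Fintype.sum_eq_zero_iff_of_nonneg (nonneg i)).mp row) j
  exact sub_eq_zero.mp (pow_eq_zero_iff two_ne_zero |>.mp ((mul_eq_zero.mp entry).resolve_left hij))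

end DirichletForm

section Trace

theorem trace_conjTranspose_mul_self_mul_conjTranspose_mul_self {l m n R : Type*} [Fintype l]
    [Fintype m] [Fintype n] [NonUnitalCommSemiring R] [StarRing R] (X : Matrix l n R)
    (Y : Matrix m n R) :
    (Xᴴ * X * (Yᴴ * Y)).trace = ((X * Yᴴ)ᴴ * (X * Yᴴ)).trace := by
  rw [conjTranspose_mul, conjTranspose_conjTranspose, ← Matrix.mul_assoc, trace_mul_comm]
  simp only [Matrix.mul_assoc]

variable {n 𝕜 : Type*} [Fintype n] [RCLike 𝕜] {A B : Matrix n n 𝕜}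

open scoped MatrixOrder in
theorem exists_eq_conjTranspose_mul_self_of_posSemidef (hA : A.PosSemidef) :
    ∃ X : Matrix n n 𝕜, A = Xᴴ * X := by
  classical exact CStarAlgebra.nonneg_iff_eq_star_mul_self.mp hA.nonneg

theorem trace_mul_nonneg_of_posSemidef (hA : A.PosSemidef) (hB : B.PosSemidef) :
    0 ≤ (A * B).trace := by
  obtain ⟨X, rfl⟩ := exists_eq_conjTranspose_mul_self_of_posSemidef hA
  obtain ⟨Y, rfl⟩ := exists_eq_conjTranspose_mul_self_of_posSemidef hB
  rw [trace_conjTranspose_mul_self_mul_conjTranspose_mul_self]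
  exact (posSemidef_conjTranspose_mul_self _).trace_nonneg

theorem trace_mul_eq_zero_iff_of_posSemidef (hA : A.PosSemidef) (hB : B.PosSemidef) :
    (A * B).trace = 0 ↔ A * B = 0 := by
  refine ⟨fun h ↦ ?_, fun h ↦ by rw [h, trace_zero]⟩
  obtain ⟨X, rfl⟩ := exists_eq_conjTranspose_mul_self_of_posSemidef hA
  obtain ⟨Y, rfl⟩ := exists_eq_conjTranspose_mul_self_of_posSemidef hB
  rw [trace_conjTranspose_mul_self_mul_conjTranspose_mul_self,
    trace_conjTranspose_mul_self_eq_zero_iff] at h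
  calc Xᴴ * X * (Yᴴ * Y) = Xᴴ * (X * Yᴴ) * Y := by simp only [Matrix.mul_assoc]
    _ = 0 := by rw [h, Matrix.mul_zero, Matrix.zero_mul]

theorem mul_eq_zero_of_sum_trace_mul_sub_eq_zero {ι : Type*} [Fintype ι] {E : ι → Matrix n n 𝕜}
    (hE : ∀ i, (E i).PosSemidef) {γ : ι → ℝ}
    (hγ : ∀ i, ∑ j, RCLike.re (E i * E j).trace * (γ i - γ j) = 0)
    {i j : ι} (hij : γ i ≠ γ j) : E i * E j = 0 := by
  have nonneg (a b : ι) : 0 ≤ (E a * E b).trace := trace_mul_nonneg_of_posSemidef (hE a) (hE b)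
  let K : Matrix ι ι ℝ := .of fun a b ↦ RCLike.re (E a * E b).trace
  have hK : K.IsSymm := .ext fun a b ↦ congrArg RCLike.re (trace_mul_comm (E b) (E a))
  have hre : RCLike.re (E i * E j).trace = 0 := by
    contrapose! hij
    exact eq_of_sum_mul_sub_eq_zero hK (fun a b ↦ (RCLike.nonneg_iff.mp (nonneg a b)).1) hγ hij
  exact (trace_mul_eq_zero_iff_of_posSemidef (hE i) (hE j)).mp <|
    RCLike.ext (by simpa using hre) (by simpa using (RCLike.nonneg_iff.mp (nonneg i j)).2)

theorem sum_re_trace_mul_sub_eq_zero {ι : Type*} [Fintype ι] [DecidableEq n]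
    {E : ι → Matrix n n 𝕜} (hsum : ∑ i, E i = 1) {γ : ι → ℝ} {j : ι}
    (hγ : (γ j : 𝕜) * (E j).trace = ∑ i, (E j * E i).trace * (γ i : 𝕜)) :
    ∑ i, RCLike.re (E j * E i).trace * (γ j - γ i) = 0 := by
  have row : (E j).trace = ∑ i, (E j * E i).trace := by
    rw [← trace_sum, ← Finset.mul_sum, hsum, Matrix.mul_one]
  have balance : ∑ i, (E j * E i).trace * ((γ j - γ i : ℝ) : 𝕜) = 0 := by
    simp only [RCLike.ofReal_sub, mul_sub, Finset.sum_sub_distrib, ← Finset.sum_mul, ← row, ← hγ,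
      mul_comm, sub_self]
  simpa only [map_sum, RCLike.re_mul_ofReal, map_zero] using congrArg RCLike.re balance

end Trace

section Sandwich

theorem mul_mul_eq_zero_of_mem_span {R S : Type*} [CommSemiring R] [NonUnitalSemiring S]
    [Module R S] [IsScalarTower R S S] [SMulCommClass R S S] {s : Set S} {b c : S}
    (hs : ∀ x ∈ s, b * x * c = 0) {x : S} (hx : x ∈ Submodule.span R s) : b * x * c = 0 := by
  have : Submodule.span R s ≤ (LinearMap.mulLeftRight R (b, c)).ker :=
    Submodule.span_le.mpr fun x hx ↦ by simpa using hs x hx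
  simpa using this hx

theorem eq_zero_or_eq_zero_of_mul_vecMulVec_star_mul_eq_zero {l m n R : Type*} [Fintype n]
    [Semiring R] [NoZeroDivisors R] [StarRing R] {B : Matrix l n R} {C : Matrix n m R}
    (h : ∀ v : n → R, B * vecMulVec v (star v) * C = 0) : B = 0 ∨ C = 0 := by
  have alt (v : n → R) : B *ᵥ v = 0 ∨ star v ᵥ* C = 0 := by
    have hv : vecMulVec (B *ᵥ v) (star v ᵥ* C) = 0 := by
      rw [← vecMulVec_mul, ← mul_vecMulVec, h]
    simpa only [← ext_iff, vecMulVec_apply, Matrix.zero_apply, mul_eq_zero, funext_iff,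
      Pi.zero_apply, forall_or_left, forall_or_right] using hv
  by_contra! hBC
  obtain ⟨v, hv⟩ : ∃ v, B *ᵥ v ≠ 0 := by simpa [ext_iff_mulVec] using hBC.1
  obtain ⟨w, hw⟩ : ∃ w : n → R, star w ᵥ* C ≠ 0 := by
    rw [← star_involutive.surjective.exists (p := fun w : n → R ↦ w ᵥ* C ≠ 0)]
    simpa [ext_iff_vecMul] using hBC.2
  have hvC : star v ᵥ* C = 0 := (alt v).resolve_left hv
  have hBw : B *ᵥ w = 0 := (alt w).resolve_right hw
  rcases alt (v + w) with hB | hC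
  · exact hv (by simpa only [mulVec_add, hBw, add_zero] using hB)
  · exact hw (by simpa only [star_add, add_vecMul, hvC, zero_add] using hC)

end Sandwich

theorem stmt16_general {n ι 𝕜 : Type*} [Fintype n] [DecidableEq n] [Fintype ι] [RCLike 𝕜]
    (E : ι → Matrix n n 𝕜) (hE : ∀ i, (E i).PosSemidef) (hEne : ∀ i, E i ≠ 0)
    (hsum : ∑ i, E i = 1)
    (hIC : ∀ A : Matrix n n 𝕜, A.IsHermitian → A ∈ Submodule.span ℝ (Set.range E))
    (γ : ι → ℝ)
    (havg : ∀ j, (γ j : 𝕜) * (E j).trace = ∑ i, (E j * E i).trace * (γ i : 𝕜)) (i j : ι) :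
    γ i = γ j := by
  by_contra hij
  have orthogonal {a b : ι} (hab : γ a ≠ γ b) : E a * E b = 0 :=
    mul_eq_zero_of_sum_trace_mul_sub_eq_zero hE
      (fun k ↦ sum_re_trace_mul_sub_eq_zero hsum (havg k)) hab
  have sandwich_range : ∀ A ∈ Set.range E, E i * A * E j = 0 := by
    rintro _ ⟨l, rfl⟩
    rcases ne_or_eq (γ i) (γ l) with hil | hil
    · rw [orthogonal hil, Matrix.zero_mul]
    · rw [Matrix.mul_assoc, orthogonal (hil ▸ hij), Matrix.mul_zero]
  have sandwich_rankOne (v : n → 𝕜) : E i * vecMulVec v (star v) * E j = 0 :=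
    mul_mul_eq_zero_of_mem_span sandwich_range
      (hIC _ (posSemidef_vecMulVec_self_star v).isHermitian)
  exact (eq_zero_or_eq_zero_of_mul_vecMulVec_star_mul_eq_zero sandwich_rankOne).elim
    (hEne i) (hEne j)

/-- For an informationally complete POVM, any real weights `γ_i` that are invariant
under averaging with respect to the transition probabilities
`p(i|j) = Tr[E_j E_i]/Tr[E_j]` — i.e. `γ_j Tr[E_j] = Σ_i Tr[E_j E_i] γ_i` for all `j` —
must all be equal. -/
theorem stmt16 (d : ℕ) (hd : 0 < d) (ι : Type) [Fintype ι]
    (E : ι → Matrix (Fin d) (Fin d) ℂ)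
    (hE : ∀ i, (E i).PosSemidef) (hEne : ∀ i, E i ≠ 0)
    (hsum : ∑ i, E i = 1)
    (hIC : ∀ A : Matrix (Fin d) (Fin d) ℂ, A.IsHermitian →
      A ∈ Submodule.span ℝ (Set.range E))
    (γ : ι → ℝ)
    (havg : ∀ j, (γ j : ℂ) * (E j).trace = ∑ i, (E j * E i).trace * (γ i : ℂ)) :
    ∀ i j, γ i = γ j :=
  stmt16_general E hE hEne hsum hIC γ havg
end
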